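/- Let H be a finite abelian group containing an element of order at least 7. Then H can be realized by a 3-net in ℙ²(ℂ) one class of which is a pencil (i.e., there exist injective maps p₁, p₂, p₃ : H → ℙ²(ℂ) with pairwise disjoint images such that p₁(x), p₂(y), p₃(z) are collinear if and only if x+y+z = 0, and the image of one of the maps p_i is contained in a line) if and only if H is cyclic. -/

import Mathlib

/-- The complex projective plane ℙ²(ℂ) = ℙ(ℂ³). -/
abbrev P2 : Type := Projectivization ℂ (Fin 3 → ℂ)

/-- Three points of ℙ²(ℂ) are collinear if representative vectors in ℂ³ span a linear
subspace of dimension at most 2. -/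
def Collin (p q r : P2) : Prop :=
  Module.finrank ℂ (Submodule.span ℂ {p.rep, q.rep, r.rep} : Submodule ℂ (Fin 3 → ℂ)) ≤ 2

/-- A realization of a finite abelian group `H` by a 3-net in ℙ²(ℂ), stated dually in
terms of the points dual to the lines of the net: three injective maps `H → ℙ²(ℂ)` with
pairwise disjoint images such that `p₁ x`, `p₂ y`, `p₃ z` are collinear iff
`x + y + z = 0`. -/
def Realizes {H : Type} [AddCommGroup H] (p₁ p₂ p₃ : H → P2) : Prop :=
  Function.Injective p₁ ∧ Function.Injective p₂ ∧ Function.Injective p₃ ∧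
  Disjoint (Set.range p₁) (Set.range p₂) ∧
  Disjoint (Set.range p₁) (Set.range p₃) ∧
  Disjoint (Set.range p₂) (Set.range p₃) ∧
  ∀ x y z : H, Collin (p₁ x) (p₂ y) (p₃ z) ↔ x + y + z = 0

/-- A line in ℙ²(ℂ): the set of points annihilated by a nonzero linear form on ℂ³. -/
def IsProjLine (L : Set P2) : Prop :=
  ∃ f : (Fin 3 → ℂ) →ₗ[ℂ] ℂ, f ≠ 0 ∧ L = {p : P2 | f p.rep = 0}


/-- Vanishing of weighted moments up to degree `d`. -/
def MomVan {ι : Type} (X Y : ι → ℂ) (S : Finset ι) (w : ι → ℂ) (d : ℕ) : Prop :=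
  ∀ i j : ℕ, i + j ≤ d → ∑ s ∈ S, w s * (X s ^ i * Y s ^ j) = 0

lemma MomVan.line {ι : Type} {X Y : ι → ℂ} {S : Finset ι} {w : ι → ℂ} {d : ℕ}
    (h : MomVan X Y S w (d + 1)) (p q r : ℂ) :
    MomVan X Y (S.filter fun s => p * X s + q * Y s + r ≠ 0)
      (fun s => w s * (p * X s + q * Y s + r)) d := by
  intro i j hij
  rw [Finset.sum_filter_of_ne]
  · have h1 := h (i+1) j (by omega)
    have h2 := h i (j+1) (by omega)
    have h3 := h i j (by omega)
    calc _ = p * ∑ s ∈ S, w s * (X s ^ (i+1) * Y s ^ j) + q * ∑ s ∈ S, w s * (X s ^ i * Y s ^ (j+1))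
          + r * ∑ s ∈ S, w s * (X s ^ i * Y s ^ j) := by
            simp only [Finset.mul_sum, ← Finset.sum_add_distrib]
            exact Finset.sum_congr rfl fun s _ => by ring
      _ = 0 := by rw [h1, h2, h3]; ring
  · intro s _ hs h0
    apply hs; simp only [h0]; ring

/-- evaluation of a quadric -/
def quadEv (c : Fin 6 → ℂ) (x y : ℂ) : ℂ :=
  c 0 * x ^ 2 + c 1 * (x * y) + c 2 * y ^ 2 + c 3 * x + c 4 * y + c 5

lemma MomVan.quad {ι : Type} {X Y : ι → ℂ} {S : Finset ι} {w : ι → ℂ} {d : ℕ}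
    (h : MomVan X Y S w (d + 2)) (c : Fin 6 → ℂ) :
    MomVan X Y (S.filter fun s => quadEv c (X s) (Y s) ≠ 0)
      (fun s => w s * quadEv c (X s) (Y s)) d := by
  intro i j hij
  rw [Finset.sum_filter_of_ne]
  · have h0 := h (i+2) j (by omega)
    have h1 := h (i+1) (j+1) (by omega)
    have h2 := h i (j+2) (by omega)
    have h3 := h (i+1) j (by omega)
    have h4 := h i (j+1) (by omega)
    have h5 := h i j (by omega)
    calc _ = c 0 * ∑ s ∈ S, w s * (X s ^ (i+2) * Y s ^ j)
          + c 1 * ∑ s ∈ S, w s * (X s ^ (i+1) * Y s ^ (j+1))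
          + c 2 * ∑ s ∈ S, w s * (X s ^ i * Y s ^ (j+2))
          + c 3 * ∑ s ∈ S, w s * (X s ^ (i+1) * Y s ^ j)
          + c 4 * ∑ s ∈ S, w s * (X s ^ i * Y s ^ (j+1))
          + c 5 * ∑ s ∈ S, w s * (X s ^ i * Y s ^ j) := by
            simp only [Finset.mul_sum, ← Finset.sum_add_distrib]
            exact Finset.sum_congr rfl fun s _ => by simp only [quadEv]; ring
      _ = 0 := by rw [h0, h1, h2, h3, h4, h5]; ring
  · intro s _ hs h0
    apply hs; simp only [h0]; ring

lemma MomVan.size {ι : Type} {X Y : ι → ℂ} (hXY : ∀ i j, X i = X j → Y i = Y j → i = j)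
    (d : ℕ) : ∀ (S : Finset ι) (w : ι → ℂ), (∀ s ∈ S, w s ≠ 0) → MomVan X Y S w d →
      S.Nonempty → d + 2 ≤ S.card := by
  classical
  induction d with
  | zero =>
    intro S w hw h hS
    by_contra hc
    have : S.card = 1 := by have := hS.card_pos; omega
    obtain ⟨s, rfl⟩ := Finset.card_eq_one.1 this
    have := h 0 0 (by omega)
    simp at this
    exact hw s (by simp) this
  | succ d ih =>
    intro S w hw h hS
    obtain ⟨s0, hs0⟩ := hS
    by_cases hex : ∃ s ∈ S, s ≠ s0
    · obtain ⟨s, hs, hne⟩ := hex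
      have : ∃ p q r : ℂ, p * X s + q * Y s + r = 0 ∧ p * X s0 + q * Y s0 + r ≠ 0 := by
        by_cases hx : X s = X s0
        · have hy : Y s ≠ Y s0 := fun hy => hne (hXY _ _ hx hy)
          refine ⟨0, 1, - Y s, by ring, ?_⟩
          intro h0; apply hy; linear_combination -h0
        · refine ⟨1, 0, - X s, by ring, ?_⟩
          intro h0; apply hx; linear_combination -h0
      obtain ⟨p, q, r, hz, hnz⟩ := this
      have := ih _ _ ?_ (h.line p q r) ⟨s0, by simp [hs0, hnz]⟩
      · have h2 : (S.filter fun s => p * X s + q * Y s + r ≠ 0).card < S.card := by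
          apply Finset.card_lt_card
          rw [Finset.filter_ssubset]
          exact ⟨s, hs, by simpa using hz⟩
        omega
      · intro t ht
        simp only [Finset.mem_filter] at ht
        exact mul_ne_zero (hw t ht.1) ht.2
    · push Not at hex
      have : S = {s0} := by
        ext t; simp; exact ⟨fun ht => hex t ht, fun ht => ht ▸ hs0⟩
      subst this
      have := h 0 0 (by omega)
      simp at this
      exact absurd this (hw s0 (by simp))

lemma line_through {ι : Type} {X Y : ι → ℂ} (i j : ι) (hXY : X i = X j → Y i = Y j → i = j)
    (hij : i ≠ j) : ∃ p q r : ℂ, (p ≠ 0 ∨ q ≠ 0 ∨ r ≠ 0) ∧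
      p * X i + q * Y i + r = 0 ∧ p * X j + q * Y j + r = 0 := by
  refine ⟨Y j - Y i, X i - X j, X j * Y i - X i * Y j, ?_, by ring, by ring⟩
  by_contra hc
  push Not at hc
  exact hij (hXY (by linear_combination hc.2.1) (by linear_combination -hc.1))

lemma MomVan.collinear {ι : Type} {X Y : ι → ℂ} (hXY : ∀ i j, X i = X j → Y i = Y j → i = j)
    (d : ℕ) : ∀ (S : Finset ι) (w : ι → ℂ), (∀ s ∈ S, w s ≠ 0) → MomVan X Y S w d →
      S.card ≤ 2 * d + 1 → ∃ p q r : ℂ, (p ≠ 0 ∨ q ≠ 0 ∨ r ≠ 0) ∧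
        ∀ s ∈ S, p * X s + q * Y s + r = 0 := by
  classical
  induction d with
  | zero =>
    intro S w hw h hS
    refine ⟨0, 0, 1, by simp, ?_⟩
    intro s hs
    have := MomVan.size hXY 0 S w hw h ⟨s, hs⟩
    omega
  | succ d ih =>
    intro S w hw h hS
    have key : ∀ p q r : ℂ, ∀ t ∈ (S.filter fun s => p * X s + q * Y s + r ≠ 0),
        w t * (p * X t + q * Y t + r) ≠ 0 := by
      intro p q r t ht
      simp only [Finset.mem_filter] at ht
      exact mul_ne_zero (hw t ht.1) ht.2
    by_cases hne : S.Nonempty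
    · have h3 := MomVan.size hXY _ S w hw h hne
      obtain ⟨i, hi, j, hj, hij⟩ := Finset.one_lt_card.1 (show 1 < S.card by omega)
      obtain ⟨p, q, r, h0, hzi, hzj⟩ := line_through i j (hXY i j) hij
      have hc : (S.filter fun s => p * X s + q * Y s + r ≠ 0).card + 2 ≤ S.card := by
        rw [← Finset.card_filter_add_card_filter_not (s := S) (fun s => p * X s + q * Y s + r ≠ 0)]
        have : ({i, j} : Finset ι) ⊆ S.filter fun s => ¬ (p * X s + q * Y s + r ≠ 0) := by
          intro t ht
          simp only [Finset.mem_insert, Finset.mem_singleton] at ht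
          rcases ht with rfl | rfl <;> simp [*]
        have := Finset.card_le_card this
        rw [Finset.card_pair hij] at this
        omega
      obtain ⟨p', q', r', h0', hz'⟩ := ih _ _ (key p q r) (h.line p q r) (by omega)
      by_cases hS' : (S.filter fun s => p * X s + q * Y s + r ≠ 0).Nonempty
      · have h4 := MomVan.size hXY d _ _ (key p q r) (h.line p q r) hS'
        refine ⟨p', q', r', h0', ?_⟩
        by_contra hcon
        push Not at hcon
        obtain ⟨s, hs, hs0⟩ := hcon
        have h5 := MomVan.size hXY d _ _ (key p' q' r') (h.line p' q' r') ⟨s, by simp [hs, hs0]⟩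
        have h6 : (S.filter fun s => p' * X s + q' * Y s + r' ≠ 0).card +
            (S.filter fun s => p * X s + q * Y s + r ≠ 0).card ≤ S.card := by
          rw [← Finset.card_filter_add_card_filter_not (s := S) (fun s => p' * X s + q' * Y s + r' ≠ 0)]
          have : (S.filter fun s => p * X s + q * Y s + r ≠ 0) ⊆
              S.filter fun s => ¬ (p' * X s + q' * Y s + r' ≠ 0) := by
            intro t ht
            have := hz' t ht
            simp only [Finset.mem_filter] at ht ⊢
            exact ⟨ht.1, by simpa using this⟩
          have := Finset.card_le_card this
          omega
        omega
      · refine ⟨p, q, r, h0, ?_⟩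
        intro s hs
        by_contra hcon
        exact hS' ⟨s, by simp [hs, hcon]⟩
    · exact ⟨0, 0, 1, by simp, fun s hs => absurd ⟨s, hs⟩ hne⟩

lemma exists_quad {ι : Type} (X Y : ι → ℂ) (f : Fin 5 → ι) :
    ∃ c : Fin 6 → ℂ, c ≠ 0 ∧ ∀ k, quadEv c (X (f k)) (Y (f k)) = 0 := by
  let L : (Fin 6 → ℂ) →ₗ[ℂ] (Fin 5 → ℂ) :=
    { toFun := fun c k => quadEv c (X (f k)) (Y (f k))
      map_add' := by intro c d; funext k; simp [quadEv]; ring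
      map_smul' := by intro c d; funext k; simp [quadEv]; ring }
  have : LinearMap.ker L ≠ ⊥ := LinearMap.ker_ne_bot_of_finrank_lt (by simp)
  obtain ⟨c, hc, hc0⟩ := Submodule.exists_mem_ne_zero_of_ne_bot this
  exact ⟨c, hc0, fun k => congrFun (LinearMap.mem_ker.1 hc) k⟩

lemma quad_mul (p q r p' q' r' : ℂ) (h : p ≠ 0 ∨ q ≠ 0 ∨ r ≠ 0) (h' : p' ≠ 0 ∨ q' ≠ 0 ∨ r' ≠ 0) :
    ∃ c : Fin 6 → ℂ, c ≠ 0 ∧ ∀ x y, quadEv c x y = (p * x + q * y + r) * (p' * x + q' * y + r') := by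
  refine ⟨![p*p', p*q'+q*p', q*q', p*r'+r*p', q*r'+r*q', r*r'], ?_, ?_⟩
  · intro h0
    have e0 := congrFun h0 0
    have e1 := congrFun h0 1
    have e2 := congrFun h0 2
    have e3 := congrFun h0 3
    have e4 := congrFun h0 4
    have e5 := congrFun h0 5
    simp at e0 e1 e2 e3 e4 e5
    grind
  · intro x y; simp [quadEv]; ring

lemma MomVan.conic {ι : Type} {X Y : ι → ℂ} (hXY : ∀ i j, X i = X j → Y i = Y j → i = j)
    (d : ℕ) (S : Finset ι) (w : ι → ℂ) (hw : ∀ s ∈ S, w s ≠ 0) (h : MomVan X Y S w (d + 3))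
    (hd : 1 ≤ d) (hS : S.card = 2 * (d + 4)) :
    ∃ c : Fin 6 → ℂ, c ≠ 0 ∧ ∀ s ∈ S, quadEv c (X s) (Y s) = 0 := by
  classical
  obtain ⟨T, hTS, hT⟩ := Finset.exists_subset_card_eq (show 5 ≤ S.card by omega)
  let e := (Finset.equivFinOfCardEq hT).symm
  obtain ⟨c, hc0, hc⟩ := exists_quad X Y (fun k => (e k : ι))
  have hcT : ∀ t ∈ T, quadEv c (X t) (Y t) = 0 := by
    intro t ht
    have := hc (e.symm ⟨t, ht⟩)
    simpa using this
  have key : ∀ t ∈ (S.filter fun s => quadEv c (X s) (Y s) ≠ 0),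
        w t * quadEv c (X t) (Y t) ≠ 0 := by
      intro t ht
      simp only [Finset.mem_filter] at ht
      exact mul_ne_zero (hw t ht.1) ht.2
  have key2 : ∀ p q r : ℂ, ∀ t ∈ (S.filter fun s => p * X s + q * Y s + r ≠ 0),
        w t * (p * X t + q * Y t + r) ≠ 0 := by
      intro p q r t ht
      simp only [Finset.mem_filter] at ht
      exact mul_ne_zero (hw t ht.1) ht.2
  have hcard : (S.filter fun s => quadEv c (X s) (Y s) ≠ 0).card + 5 ≤ S.card := by
    rw [← Finset.card_filter_add_card_filter_not (s := S) (fun s => quadEv c (X s) (Y s) ≠ 0)]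
    have : T ⊆ S.filter fun s => ¬ (quadEv c (X s) (Y s) ≠ 0) := by
      intro t ht
      simp only [Finset.mem_filter]
      exact ⟨hTS ht, by simpa using hcT t ht⟩
    have := Finset.card_le_card this
    omega
  have hq := (MomVan.quad (d := d + 1) h c)
  by_cases hne : (S.filter fun s => quadEv c (X s) (Y s) ≠ 0).Nonempty
  · have h1 := MomVan.size hXY _ _ _ key hq hne
    obtain ⟨p, q, r, h0, hz⟩ := MomVan.collinear hXY _ _ _ key hq (by omega)
    have h2 : (S.filter fun s => p * X s + q * Y s + r ≠ 0).card +
        (S.filter fun s => quadEv c (X s) (Y s) ≠ 0).card ≤ S.card := by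
      rw [← Finset.card_filter_add_card_filter_not (s := S) (fun s => p * X s + q * Y s + r ≠ 0)]
      have : (S.filter fun s => quadEv c (X s) (Y s) ≠ 0) ⊆
          S.filter fun s => ¬ (p * X s + q * Y s + r ≠ 0) := by
        intro t ht
        have := hz t ht
        simp only [Finset.mem_filter] at ht ⊢
        exact ⟨ht.1, by simpa using this⟩
      have := Finset.card_le_card this
      omega
    obtain ⟨p', q', r', h0', hz'⟩ := MomVan.collinear hXY _ _ _ (key2 p q r)
      (MomVan.line (d := d + 2) h p q r) (by omega)
    obtain ⟨c', hc', hc''⟩ := quad_mul p q r p' q' r' h0 h0'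
    refine ⟨c', hc', fun s hs => ?_⟩
    rw [hc'']
    by_cases hh : p * X s + q * Y s + r = 0
    · rw [hh, zero_mul]
    · rw [hz' s (by simp [hs, hh]), mul_zero]
  · refine ⟨c, hc0, fun s hs => ?_⟩
    by_contra hcon
    exact hne ⟨s, by simp [hs, hcon]⟩

lemma cyclic_of_ratio {H : Type} [AddCommGroup H] [Finite H] (ρ : H → ℂ) (h0 : ∀ x, ρ x ≠ 0)
    (hinj : Function.Injective ρ) (hm : ∀ x h, ρ (x + h) * ρ 0 = ρ x * ρ h) : IsAddCyclic H := by
  rw [← isCyclic_multiplicative_iff]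
  let f : Multiplicative H →* ℂ :=
    { toFun := fun x => ρ x.toAdd / ρ 0
      map_one' := by simp [h0]
      map_mul' := by
        intro x y
        have := hm x.toAdd y.toAdd
        have h1 := h0 0
        simp only [toAdd_mul]
        field_simp
        linear_combination this }
  refine isCyclic_of_injective_ringHom f ?_
  intro x y hxy
  have : ρ x.toAdd / ρ 0 = ρ y.toAdd / ρ 0 := hxy
  have h1 := h0 0
  field_simp at this
  exact hinj this

lemma factor_form (α β γ : ℂ) : ∃ l1 l2 k1 k2 : ℂ,
    α = l1 * k1 ∧ β = l1 * k2 + l2 * k1 ∧ γ = l2 * k2 := by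
  by_cases hγ : γ = 0
  · exact ⟨1, 0, α, β, by ring, by ring, by simp [hγ]⟩
  · obtain ⟨s, hs⟩ := IsAlgClosed.exists_pow_nat_eq (β ^ 2 - 4 * α * γ) (n := 2) (by norm_num)
    refine ⟨(β + s) / 2, γ, (β - s) / (2 * γ), 1, ?_, ?_, by ring⟩
    · field_simp; linear_combination hs
    · field_simp; ring

set_option maxHeartbeats 2000000 in
/-- The group-theoretic conclusion once all points lie on a conic. -/
lemma cyclic_of_conic {H : Type} [AddCommGroup H] [Fintype H] (hn : 3 ≤ Fintype.card H)
    (m a a' b b' : H → ℂ)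
    (h : ∀ x y z, a' y - m x * a y = b' z - m x * b z ↔ x + y + z = 0)
    (c : Fin 6 → ℂ) (hc : c ≠ 0) (hA : ∀ y, quadEv c (a y) (a' y) = 0)
    (hB : ∀ z, quadEv c (b z) (b' z) = 0) : IsAddCyclic H := by
  classical
  have hnt : Nontrivial H := Fintype.one_lt_card_iff_nontrivial.1 (by omega)
  have minj : Function.Injective m := by
    intro x x' hx
    have h1 := (h x 0 (-x)).2 (by abel)
    rw [hx] at h1
    have h2 := (h x' 0 (-x)).1 h1
    have : x' - x = 0 := by rw [← h2]; abel
    exact (sub_eq_zero.1 this).symm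
  have ginj : ∀ x y y', a' y - m x * a y = a' y' - m x * a y' → y = y' := by
    intro x y y' he
    have h1 := (h x y' (-x-y')).2 (by abel)
    rw [← he] at h1
    have h2 := (h x y (-x-y')).1 h1
    have : y - y' = 0 := by rw [← h2]; abel
    exact sub_eq_zero.1 this
  have hdist : ∀ y z, a y = b z → a' y = b' z → False := by
    intro y z h1 h2
    obtain ⟨x, x', hx⟩ := exists_pair_ne H
    have e1 := (h x y z).1 (by rw [h1, h2])
    have e2 := (h x' y z).1 (by rw [h1, h2])
    apply hx
    have : x - x' = (x + y + z) - (x' + y + z) := by abel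
    rw [e1, e2, sub_zero] at this
    exact sub_eq_zero.1 this
  have ht : ∀ x y, b (-x-y) - a y ≠ 0 := by
    intro x y h0
    have h1 := (h x y (-x-y)).2 (by abel)
    have h2 : a y = b (-x-y) := by linear_combination -h0
    refine hdist y (-x-y) h2 ?_
    rw [h2] at h1
    linear_combination h1
  have hD : ∀ x y, (2 * c 0 + c 1 * m x) * a y + (c 1 + 2 * c 2 * m x) * a' y + c 3 + m x * c 4
      + (b (-x-y) - a y) * (c 0 + c 1 * m x + c 2 * m x ^ 2) = 0 := by
    intro x y
    apply mul_left_cancel₀ (ht x y)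
    have h1 := (h x y (-x-y)).2 (by abel)
    have h2 := hA y
    have h3 := hB (-x-y)
    have h4 : b' (-x-y) = a' y + m x * (b (-x-y) - a y) := by linear_combination -h1
    rw [h4] at h3
    simp only [quadEv] at h2 h3
    linear_combination h3 - h2
  have hq : ∀ x, c 0 + c 1 * m x + c 2 * m x ^ 2 ≠ 0 := by
    intro x h0
    obtain ⟨y1, y2, y3, h12, h13, h23⟩ := Fintype.two_lt_card_iff.1 (show 2 < Fintype.card H by omega)
    have n12 : (a' y1 - m x * a y1) - (a' y2 - m x * a y2) ≠ 0 :=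
      fun he => h12 (ginj x _ _ (sub_eq_zero.1 he))
    have n13 : (a' y1 - m x * a y1) - (a' y3 - m x * a y3) ≠ 0 :=
      fun he => h13 (ginj x _ _ (sub_eq_zero.1 he))
    have n23 : (a' y2 - m x * a y2) - (a' y3 - m x * a y3) ≠ 0 :=
      fun he => h23 (ginj x _ _ (sub_eq_zero.1 he))
    have d1 := hD x y1
    have d2 := hD x y2
    rw [h0] at d1 d2
    have hb : c 1 + 2 * c 2 * m x = 0 := by
      apply mul_left_cancel₀ n12
      linear_combination d1 - d2 - 2 * (a y1 - a y2) * h0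
    have hb1 : c 1 = -2 * c 2 * m x := by linear_combination hb
    have h00 : c 0 = c 2 * m x ^ 2 := by linear_combination h0 - m x * hb
    have hb2 : c 3 = - m x * c 4 := by
      rw [hb1, h00] at d1; linear_combination d1
    have q1 := hA y1
    have q2 := hA y2
    have q3 := hA y3
    simp only [quadEv] at q1 q2 q3
    rw [hb2, h00, hb1] at q1 q2 q3
    have r12 : c 2 * ((a' y1 - m x * a y1) + (a' y2 - m x * a y2)) + c 4 = 0 := by
      apply mul_left_cancel₀ n12
      linear_combination q1 - q2
    have r13 : c 2 * ((a' y1 - m x * a y1) + (a' y3 - m x * a y3)) + c 4 = 0 := by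
      apply mul_left_cancel₀ n13
      linear_combination q1 - q3
    have z2 : c 2 = 0 := by
      apply mul_left_cancel₀ n23
      linear_combination r12 - r13
    have z4 : c 4 = 0 := by rw [z2] at r12; linear_combination r12
    have z5 : c 5 = 0 := by rw [z2, z4] at q1; linear_combination q1
    apply hc
    funext k
    have z1 : c 1 = 0 := by rw [hb1, z2]; ring
    have z0 : c 0 = 0 := by rw [h00, z2]; ring
    have z3 : c 3 = 0 := by rw [hb2, z4]; ring
    clear * - z0 z1 z2 z3 z4 z5
    fin_cases k
    · exact z0
    · exact z1
    · exact z2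
    · exact z3
    · exact z4
    · exact z5
  obtain ⟨l1, l2, k1, k2, f0, f1, f2⟩ := factor_form (c 0) (c 1) (c 2)
  have hqf : ∀ x, c 0 + c 1 * m x + c 2 * m x ^ 2 = (l1 + l2 * m x) * (k1 + k2 * m x) := by
    intro x; rw [f0, f1, f2]; ring
  have hL : ∀ x, l1 + l2 * m x ≠ 0 := fun x h0 => hq x (by rw [hqf, h0, zero_mul])
  have hM : ∀ x, k1 + k2 * m x ≠ 0 := fun x h0 => hq x (by rw [hqf, h0, mul_zero])
  have E1 : ∀ x y, (k1 + k2 * m x) * (l1 * b (-x-y) + l2 * b' (-x-y))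
      + (l1 + l2 * m x) * (k1 * a y + k2 * a' y) + (c 3 + m x * c 4) = 0 := by
    intro x y
    have h1 := (h x y (-x-y)).2 (by abel)
    have h4 : b' (-x-y) = a' y + m x * (b (-x-y) - a y) := by linear_combination -h1
    have := hD x y
    rw [f0, f1, f2] at this
    rw [h4]
    linear_combination this
  have E2 : ∀ x y, (l1 + l2 * m x) * (k1 * b (-x-y) + k2 * b' (-x-y))
      + (k1 + k2 * m x) * (l1 * a y + l2 * a' y) + (c 3 + m x * c 4) = 0 := by
    intro x y
    have h1 := (h x y (-x-y)).2 (by abel)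
    have h4 : b' (-x-y) = a' y + m x * (b (-x-y) - a y) := by linear_combination -h1
    have := hD x y
    rw [f0, f1, f2] at this
    rw [h4]
    linear_combination this
  set L : H → ℂ := fun x => l1 + l2 * m x with hLdef
  set M : H → ℂ := fun x => k1 + k2 * m x with hMdef
  set U : H → ℂ := fun y => l1 * a y + l2 * a' y with hU
  set V : H → ℂ := fun y => k1 * a y + k2 * a' y with hV
  set ρ : H → ℂ := fun x => M x / L x with hρ
  have hρ0 : ∀ x, ρ x ≠ 0 := fun x => div_ne_zero (hM x) (hL x)
  have hUd : ∀ x s y1 y2, ρ x * (U (y1 + s) - U (y2 + s)) = ρ (x + s) * (U y1 - U y2) := by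
    intro x s y1 y2
    have e1 := E2 x (y1 + s)
    have e2 := E2 x (y2 + s)
    have e3 := E2 (x + s) y1
    have e4 := E2 (x + s) y2
    rw [show -x - (y1 + s) = -(x+s) - y1 by abel] at e1
    rw [show -x - (y2 + s) = -(x+s) - y2 by abel] at e2
    have n1 : L x ≠ 0 := hL x
    have n2 : L (x+s) ≠ 0 := hL (x+s)
    change L x * _ + M x * U (y1+s) + _ = 0 at e1
    change L x * _ + M x * U (y2+s) + _ = 0 at e2
    change L (x+s) * _ + M (x+s) * U y1 + _ = 0 at e3
    change L (x+s) * _ + M (x+s) * U y2 + _ = 0 at e4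
    simp only [hρ]
    rw [div_mul_eq_mul_div, div_mul_eq_mul_div, div_eq_div_iff n1 n2]
    linear_combination L (x+s) * (e1 - e2) - L x * (e3 - e4)
  have hVd : ∀ x s y1 y2, (V (y1 + s) - V (y2 + s)) * ρ (x + s) = (V y1 - V y2) * ρ x := by
    intro x s y1 y2
    have e1 := E1 x (y1 + s)
    have e2 := E1 x (y2 + s)
    have e3 := E1 (x + s) y1
    have e4 := E1 (x + s) y2
    rw [show -x - (y1 + s) = -(x+s) - y1 by abel] at e1
    rw [show -x - (y2 + s) = -(x+s) - y2 by abel] at e2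
    have n1 : L x ≠ 0 := hL x
    have n2 : L (x+s) ≠ 0 := hL (x+s)
    change M x * _ + L x * V (y1+s) + _ = 0 at e1
    change M x * _ + L x * V (y2+s) + _ = 0 at e2
    change M (x+s) * _ + L (x+s) * V y1 + _ = 0 at e3
    change M (x+s) * _ + L (x+s) * V y2 + _ = 0 at e4
    simp only [hρ]
    rw [← mul_div_assoc, ← mul_div_assoc, div_eq_div_iff n2 n1]
    linear_combination M (x+s) * (e1 - e2) - M x * (e3 - e4)
  by_cases hind : l1 * k2 - l2 * k1 = 0
  · exfalso
    -- proportional factors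
    have hρc : ∀ x x', ρ x = ρ x' := by
      intro x x'
      have n1 : L x ≠ 0 := hL x
      have n2 : L x' ≠ 0 := hL x'
      simp only [hρ]
      rw [div_eq_div_iff n1 n2]
      simp only [hLdef, hMdef]
      linear_combination (m x - m x') * hind
    have hUc : ∀ y, U y = U 0 := by
      intro y
      have e : ∀ s, U (y + s) - U s = U y - U 0 := by
        intro s
        have := hUd 0 s y 0
        rw [hρc (0+s) 0, zero_add] at this
        exact mul_left_cancel₀ (hρ0 0) this
      have e2 : ∑ s, (U (y + s) - U s) = ∑ s : H, (U y - U 0) := Finset.sum_congr rfl fun s _ => e s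
      rw [Finset.sum_sub_distrib, show ∑ s, U (y + s) = ∑ s, U s from Equiv.sum_comp (Equiv.addLeft y) U, sub_self] at e2
      simp only [Finset.sum_const, Finset.card_univ, nsmul_eq_mul] at e2
      have hN : (Fintype.card H : ℂ) ≠ 0 := by simp
      apply mul_left_cancel₀ hN
      linear_combination -e2
    have hVU : ∀ y, L 0 * V y = M 0 * U y := by
      intro y
      simp only [hLdef, hMdef, hU, hV]
      linear_combination (a' y - m 0 * a y) * hind
    have hU'c : ∀ z, l1 * b z + l2 * b' z = l1 * b 0 + l2 * b' 0 := by
      intro z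
      have n1 : M 0 ≠ 0 := hM 0
      have e1 := E1 0 (-z)
      have e2 := E1 0 0
      change M 0 * _ + L 0 * V (-z) + _ = 0 at e1
      change M 0 * _ + L 0 * V 0 + _ = 0 at e2
      rw [hVU, hUc] at e1
      rw [hVU] at e2
      simp only [neg_zero, sub_neg_eq_add, zero_add, sub_self] at e1 e2
      apply mul_left_cancel₀ n1
      linear_combination e1 - e2
    set κ : ℂ := l1 * b 0 + l2 * b' 0 - U 0 with hκ
    have hk : ∀ x y, (b (-x-y) - a y) * L x = κ := by
      intro x y
      have h1 := (h x y (-x-y)).2 (by abel)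
      have e1 := hU'c (-x-y)
      have e2 := hUc y
      have h4 : b' (-x-y) = a' y + m x * (b (-x-y) - a y) := by linear_combination -h1
      rw [h4] at e1
      simp only [hLdef, hU, hκ] at *
      linear_combination e1 - e2
    have hκ0 : κ ≠ 0 := by
      rw [← hk 0 0]; exact mul_ne_zero (ht 0 0) (hL 0)
    have hN : (Fintype.card H : ℂ) ≠ 0 := by simp
    have hs1 : ∀ x, (∑ z, b z - ∑ y, a y) * L x = Fintype.card H * κ := by
      intro x
      have e : ∑ y, (b (-x-y) - a y) * L x = ∑ y : H, κ := Finset.sum_congr rfl fun y _ => hk x y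
      rw [← Finset.sum_mul, Finset.sum_sub_distrib, show ∑ y, b (-x-y) = ∑ z, b z from Equiv.sum_comp (Equiv.subLeft (-x)) b] at e
      simpa using e
    have hs2 : ∀ x, (∑ z, b' z - ∑ y, a' y) = m x * (∑ z, b z - ∑ y, a y) := by
      intro x
      have e : ∑ y, (b' (-x-y) - a' y) = ∑ y : H, m x * (b (-x-y) - a y) :=
        Finset.sum_congr rfl fun y _ => by
          have h1 := (h x y (-x-y)).2 (by abel)
          linear_combination -h1
      rw [← Finset.mul_sum, Finset.sum_sub_distrib, Finset.sum_sub_distrib,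
        show ∑ y, b (-x-y) = ∑ z, b z from Equiv.sum_comp (Equiv.subLeft (-x)) b, show ∑ y, b' (-x-y) = ∑ z, b' z from Equiv.sum_comp (Equiv.subLeft (-x)) b'] at e
      exact e
    have hs0 : (∑ z, b z - ∑ y, a y) ≠ 0 := by
      intro h0
      have := hs1 0
      rw [h0, zero_mul] at this
      exact mul_ne_zero hN hκ0 this.symm
    obtain ⟨x, x', hx⟩ := exists_pair_ne H
    exact hx (minj (mul_right_cancel₀ hs0 ((hs2 x).symm.trans (hs2 x'))))
  · refine cyclic_of_ratio ρ hρ0 ?_ ?_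
    · intro x x' hx
      have n1 : L x ≠ 0 := hL x
      have n2 : L x' ≠ 0 := hL x'
      simp only [hρ] at hx
      rw [div_eq_div_iff n1 n2] at hx
      simp only [hLdef, hMdef] at hx
      apply minj
      apply mul_left_cancel₀ hind
      linear_combination hx
    · intro x s
      obtain ⟨y1, y2, hy⟩ := exists_pair_ne H
      by_cases hu : U y1 - U y2 = 0
      · by_cases hv : V y1 - V y2 = 0
        · exfalso
          apply hy
          simp only [hU, hV] at hu hv
          have g1 : a y1 = a y2 := by
            apply mul_left_cancel₀ hind; linear_combination k2 * hu - l2 * hv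
          have g2 : a' y1 = a' y2 := by
            apply mul_left_cancel₀ hind; linear_combination l1 * hv - k1 * hu
          exact ginj 0 _ _ (by rw [g1, g2])
        · have e1 := hVd x s y1 y2
          have e2 := hVd 0 s y1 y2
          rw [zero_add] at e2
          apply mul_left_cancel₀ hv
          linear_combination ρ s * e1 - ρ (x+s) * e2
      · have e1 := hUd x s y1 y2
        have e2 := hUd 0 s y1 y2
        rw [zero_add] at e2
        apply mul_left_cancel₀ hu
        linear_combination ρ x * e2 - ρ 0 * e1

lemma moments_eq {H : Type} [AddCommGroup H] [Fintype H]
    (m a a' b b' : H → ℂ)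
    (h : ∀ x y z, a' y - m x * a y = b' z - m x * b z ↔ x + y + z = 0)
    (minj : Function.Injective m) (i j : ℕ) (hij : i + j < Fintype.card H) :
    ∑ y, a y ^ i * a' y ^ j = ∑ z, b z ^ i * b' z ^ j := by
  classical
  set k := i + j with hk
  let D : ℕ → ℂ := fun t => (-1) ^ t * (k.choose t : ℂ) *
    (∑ y, a y ^ t * a' y ^ (k - t) - ∑ z, b z ^ t * b' z ^ (k - t))
  let P : Polynomial ℂ := ∑ t ∈ Finset.range (k + 1), Polynomial.C (D t) * Polynomial.X ^ t
  have expand : ∀ (f f' : H → ℂ) (μ : ℂ), ∑ y, (f' y - μ * f y) ^ k =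
      ∑ t ∈ Finset.range (k + 1), (-1) ^ t * (k.choose t : ℂ) * (∑ y, f y ^ t * f' y ^ (k - t)) * μ ^ t := by
    intro f f' μ
    simp only [Finset.mul_sum, Finset.sum_mul]
    rw [Finset.sum_comm]
    refine Finset.sum_congr rfl fun y _ => ?_
    rw [show f' y - μ * f y = (-(μ * f y)) + f' y by ring, add_pow]
    refine Finset.sum_congr rfl fun t _ => ?_
    rw [neg_pow, mul_pow]; ring
  have hP : P = 0 := by
    refine Polynomial.eq_zero_of_natDegree_lt_card_of_eval_eq_zero P minj ?_ ?_
    · intro x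
      have e : ∑ y, (a' y - m x * a y) ^ k = ∑ z, (b' z - m x * b z) ^ k := by
        rw [← Equiv.sum_comp (Equiv.subLeft (-x)) (fun z => (b' z - m x * b z) ^ k)]
        refine Finset.sum_congr rfl fun y _ => ?_
        have := (h x y (-x-y)).2 (by abel)
        simp only [Equiv.subLeft_apply]
        rw [this]
      rw [expand, expand, ← sub_eq_zero, ← Finset.sum_sub_distrib] at e
      simp only [P, Polynomial.eval_finsetSum, Polynomial.eval_mul, Polynomial.eval_C,
        Polynomial.eval_pow, Polynomial.eval_X, D]
      rw [← e]
      exact Finset.sum_congr rfl fun t _ => by ring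
    · refine lt_of_le_of_lt ?_ hij
      refine Polynomial.natDegree_sum_le_of_forall_le _ _ fun t ht => ?_
      refine (Polynomial.natDegree_C_mul_X_pow_le _ _).trans ?_
      have := Finset.mem_range.1 ht
      omega
  have hc : P.coeff i = D i := by
    simp only [P, Polynomial.finsetSum_coeff, Polynomial.coeff_C_mul_X_pow]
    rw [Finset.sum_ite_eq]
    simp [hk]
  rw [hP, Polynomial.coeff_zero] at hc
  have h0 : (k.choose i : ℂ) ≠ 0 := by
    exact_mod_cast (Nat.choose_pos (by omega)).ne'
  have h1 : ((-1 : ℂ)) ^ i ≠ 0 := pow_ne_zero _ (by norm_num)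
  simp only [D] at hc
  have h2 := (mul_eq_zero.1 hc.symm).resolve_left (mul_ne_zero h1 h0)
  rw [show k - i = j by omega] at h2
  exact sub_eq_zero.1 h2

lemma affine_core {H : Type} [AddCommGroup H] [Fintype H] (hn : 5 ≤ Fintype.card H)
    (m a a' b b' : H → ℂ)
    (h : ∀ x y z, a' y - m x * a y = b' z - m x * b z ↔ x + y + z = 0) : IsAddCyclic H := by
  classical
  have hnt : Nontrivial H := Fintype.one_lt_card_iff_nontrivial.1 (by omega)
  have minj : Function.Injective m := by
    intro x x' hx
    have h1 := (h x 0 (-x)).2 (by abel)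
    rw [hx] at h1
    have h2 := (h x' 0 (-x)).1 h1
    have : x' - x = 0 := by rw [← h2]; abel
    exact (sub_eq_zero.1 this).symm
  have ainj : ∀ y y', a y = a y' → a' y = a' y' → y = y' := by
    intro y y' he he'
    have h1 := (h 0 y' (-y')).2 (by abel)
    rw [← he, ← he'] at h1
    have h2 := (h 0 y (-y')).1 h1
    have : y - y' = 0 := by rw [← h2]; abel
    exact sub_eq_zero.1 this
  have binj : ∀ y y', b y = b y' → b' y = b' y' → y = y' := by
    intro y y' he he'
    have h1 := (h 0 (-y') y').2 (by abel)
    rw [← he, ← he'] at h1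
    have h2 := (h 0 (-y') y).1 h1
    have : y - y' = 0 := by rw [← h2]; abel
    exact sub_eq_zero.1 this
  have hdist : ∀ y z, a y = b z → a' y = b' z → False := by
    intro y z h1 h2
    obtain ⟨x, x', hx⟩ := exists_pair_ne H
    have e1 := (h x y z).1 (by rw [h1, h2])
    have e2 := (h x' y z).1 (by rw [h1, h2])
    apply hx
    have : x - x' = (x + y + z) - (x' + y + z) := by abel
    rw [e1, e2, sub_zero] at this
    exact sub_eq_zero.1 this
  obtain ⟨d, hd⟩ : ∃ d, Fintype.card H = d + 4 := ⟨Fintype.card H - 4, by omega⟩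
  have hmom : MomVan (Sum.elim a b) (Sum.elim a' b') Finset.univ
      (Sum.elim (fun _ => (1 : ℂ)) (fun _ => (-1 : ℂ))) (d + 3) := by
    intro i j hij
    rw [Fintype.sum_sum_type]
    simp only [Sum.elim_inl, Sum.elim_inr, one_mul, neg_mul, Finset.sum_neg_distrib]
    rw [moments_eq m a a' b b' h minj i j (by omega)]
    ring
  obtain ⟨c, hc, hz⟩ := MomVan.conic (by
      rintro (i | i) (j | j) hx hy
      · simp only [Sum.elim_inl] at hx hy; rw [ainj i j hx hy]
      · exact (hdist i j hx hy).elim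
      · exact (hdist j i hx.symm hy.symm).elim
      · simp only [Sum.elim_inr] at hx hy; rw [binj i j hx hy])
    d Finset.univ _ (by rintro (i | i) _ <;> simp) hmom (by omega)
    (by simp [hd]; ring)
  exact cyclic_of_conic (by omega) m a a' b b' h c hc
    (fun y => hz (Sum.inl y) (Finset.mem_univ _)) (fun z => hz (Sum.inr z) (Finset.mem_univ _))

lemma collin_iff_det (e : (Fin 3 → ℂ) ≃ₗ[ℂ] (Fin 3 → ℂ)) (p q r : P2) :
    Collin p q r ↔ Matrix.det (Matrix.of ![e p.rep, e q.rep, e r.rep]) = 0 := by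
  have h1 : LinearIndependent ℂ (Matrix.of ![e p.rep, e q.rep, e r.rep]).row ↔
      LinearIndependent ℂ ![p.rep, q.rep, r.rep] := by
    have : (Matrix.of ![e p.rep, e q.rep, e r.rep]).row =
      (e : (Fin 3 → ℂ) →ₗ[ℂ] (Fin 3 → ℂ)) ∘ ![p.rep, q.rep, r.rep] := by
      funext i; fin_cases i <;> rfl
    rw [this, LinearMap.linearIndependent_iff (e : (Fin 3 → ℂ) →ₗ[ℂ] (Fin 3 → ℂ)) e.ker]
  rw [Matrix.linearIndependent_rows_iff_isUnit, Matrix.isUnit_iff_isUnit_det, isUnit_iff_ne_zero,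
    linearIndependent_iff_card_le_finrank_span] at h1
  have h2 : Set.range ![p.rep, q.rep, r.rep] = {p.rep, q.rep, r.rep} := by
    simp only [Matrix.range_cons, Matrix.range_empty, Set.singleton_union, Set.union_empty]
  rw [h2] at h1
  unfold Collin
  unfold Set.finrank at h1
  rw [Fintype.card_fin] at h1
  rw [← not_iff_not, ← ne_eq (Matrix.det _), h1, not_le]
  exact Iff.rfl

lemma collin_mk (u v w : Fin 3 → ℂ) (hu : u ≠ 0) (hv : v ≠ 0) (hw : w ≠ 0) :
    Collin (Projectivization.mk ℂ u hu) (Projectivization.mk ℂ v hv) (Projectivization.mk ℂ w hw) ↔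
      Matrix.det (Matrix.of ![u, v, w]) = 0 := by
  rw [collin_iff_det (LinearEquiv.refl ℂ _)]
  obtain ⟨s, hs⟩ := Projectivization.exists_smul_eq_mk_rep ℂ u hu
  obtain ⟨t, ht⟩ := Projectivization.exists_smul_eq_mk_rep ℂ v hv
  obtain ⟨r, hr⟩ := Projectivization.exists_smul_eq_mk_rep ℂ w hw
  rw [← hs, ← ht, ← hr]
  have : Matrix.det (Matrix.of ![LinearEquiv.refl ℂ _ (s • u), LinearEquiv.refl ℂ _ (t • v),
      LinearEquiv.refl ℂ _ (r • w)]) = (s * t * r : ℂ) * Matrix.det (Matrix.of ![u, v, w]) := by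
    simp [Matrix.det_fin_three, Units.smul_def]
    ring
  rw [this]
  simp

lemma exists_coords {ι : Type} [Finite ι] [Nonempty ι] (f : (Fin 3 → ℂ) →ₗ[ℂ] ℂ) (hf : f ≠ 0)
    (v : ι → (Fin 3 → ℂ)) (hv : ∀ i, v i ≠ 0) (hfv : ∀ i, f (v i) = 0) :
    ∃ e : (Fin 3 → ℂ) ≃ₗ[ℂ] (Fin 3 → ℂ), (∀ w, e w 2 = f w) ∧ ∀ i, e (v i) 0 ≠ 0 := by
  obtain ⟨g, hg⟩ := Module.exists_dual_forall_apply_ne_zero (K := ℂ) v hv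
  have hli : LinearIndependent ℂ (![f, g] : Fin 2 → Module.Dual ℂ (Fin 3 → ℂ)) := by
    rw [LinearIndependent.pair_iff' hf]
    intro a ha
    obtain ⟨i⟩ := ‹Nonempty ι›
    apply hg i
    rw [← ha]
    simp [hfv i]
  obtain ⟨g2, hg2⟩ := exists_linearIndependent_cons_of_lt_finrank hli
    (show 2 < Module.finrank ℂ (Module.Dual ℂ (Fin 3 → ℂ)) by
      rw [Subspace.dual_finrank_eq]; simp)
  have hsp : Submodule.span ℂ (Set.range (Fin.cons g2 ![f, g] : Fin 3 → Module.Dual ℂ (Fin 3 → ℂ))) = ⊤ :=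
    hg2.span_eq_top_of_card_eq_finrank' (by rw [Subspace.dual_finrank_eq]; simp)
  let T : (Fin 3 → ℂ) →ₗ[ℂ] (Fin 3 → ℂ) := LinearMap.pi ![g, g2, f]
  have hT : Function.Injective T := by
    rw [← LinearMap.ker_eq_bot, LinearMap.ker_eq_bot']
    intro w hw
    have w0 : g w = 0 := congrFun hw 0
    have w1 : g2 w = 0 := congrFun hw 1
    have w2 : f w = 0 := congrFun hw 2
    rw [← Module.forall_dual_apply_eq_zero_iff ℂ]
    intro φ
    have : φ ∈ Submodule.span ℂ (Set.range (Fin.cons g2 ![f, g] : Fin 3 → Module.Dual ℂ (Fin 3 → ℂ))) := by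
      rw [hsp]; trivial
    induction this using Submodule.span_induction with
    | mem x hx =>
      obtain ⟨i, rfl⟩ := hx
      fin_cases i
      · exact w1
      · exact w2
      · exact w0
    | zero => rfl
    | add x y _ _ hx hy => simp [hx, hy]
    | smul a x _ hx => simp [hx]
  refine ⟨LinearEquiv.ofInjectiveEndo T hT, ?_, ?_⟩
  · intro w; rfl
  · intro i; exact hg i

lemma eq_of_coords (e : (Fin 3 → ℂ) ≃ₗ[ℂ] (Fin 3 → ℂ)) (p q : P2) (h0 : e p.rep 0 ≠ 0)
    (hp : e p.rep 2 = 0) (hq : e q.rep 2 = 0)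
    (h : e p.rep 0 * e q.rep 1 = e p.rep 1 * e q.rep 0) : p = q := by
  rw [← Projectivization.mk_rep p, ← Projectivization.mk_rep q, eq_comm,
    Projectivization.mk_eq_mk_iff']
  refine ⟨e q.rep 0 / e p.rep 0, e.injective ?_⟩
  rw [map_smul]
  funext i
  fin_cases i
  · simp [h0]
  · simp; field_simp; linear_combination -h
  · simp [hp, hq]

lemma collin_swap12 (p q r : P2) : Collin p q r ↔ Collin q p r := by
  unfold Collin; rw [Set.insert_comm]

lemma collin_swap23 (p q r : P2) : Collin p q r ↔ Collin p r q := by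
  unfold Collin; rw [Set.pair_comm]

lemma Realizes.swap12 {H : Type} [AddCommGroup H] {p₁ p₂ p₃ : H → P2} (h : Realizes p₁ p₂ p₃) :
    Realizes p₂ p₁ p₃ := by
  obtain ⟨h1, h2, h3, h12, h13, h23, h⟩ := h
  refine ⟨h2, h1, h3, h12.symm, h23, h13, fun x y z => ?_⟩
  rw [collin_swap12, h, add_comm y x]

lemma Realizes.swap23 {H : Type} [AddCommGroup H] {p₁ p₂ p₃ : H → P2} (h : Realizes p₁ p₂ p₃) :
    Realizes p₁ p₃ p₂ := by
  obtain ⟨h1, h2, h3, h12, h13, h23, h⟩ := h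
  refine ⟨h1, h3, h2, h13, h12, h23.symm, fun x y z => ?_⟩
  rw [collin_swap23, h, add_right_comm]

lemma off_line {H : Type} [AddCommGroup H] [Nontrivial H] {p₁ p₂ p₃ : H → P2}
    (hR : Realizes p₁ p₂ p₃) (e : (Fin 3 → ℂ) ≃ₗ[ℂ] (Fin 3 → ℂ))
    (h0 : ∀ x, e (p₁ x).rep 0 ≠ 0) (h2 : ∀ x, e (p₁ x).rep 2 = 0) (y : H) :
    e (p₂ y).rep 2 ≠ 0 := by
  intro hy
  obtain ⟨-, -, -, h12, -, -, h⟩ := hR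
  have hne : ∀ x, p₁ x ≠ p₂ y := fun x he =>
    Set.disjoint_left.1 h12 ⟨x, rfl⟩ ⟨y, he.symm⟩
  have hz : e (p₃ (-y)).rep 2 = 0 := by
    have h1 := (h 0 y (-y)).2 (by abel)
    rw [collin_iff_det e] at h1
    simp [Matrix.det_fin_three, h2, hy] at h1
    by_contra hcon
    apply hne 0
    apply eq_of_coords e _ _ (h0 0) (h2 0) hy
    apply mul_right_cancel₀ hcon
    linear_combination h1
  obtain ⟨x, hx⟩ := exists_ne (0 : H)
  apply hx
  have h1 := (h x y (-y)).1 (by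
    rw [collin_iff_det e]
    simp [Matrix.det_fin_three, h2, hy, hz])
  simpa using h1

lemma cyclic_of_pencil {H : Type} [AddCommGroup H] [Fintype H] (hn : 5 ≤ Fintype.card H)
    {p₁ p₂ p₃ : H → P2} (hR : Realizes p₁ p₂ p₃) {L : Set P2} (hL : IsProjLine L)
    (hp : Set.range p₁ ⊆ L) : IsAddCyclic H := by
  have hnt : Nontrivial H := Fintype.one_lt_card_iff_nontrivial.1 (by omega)
  obtain ⟨f, hf, rfl⟩ := hL
  have hfv : ∀ x, f (p₁ x).rep = 0 := fun x => hp ⟨x, rfl⟩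
  obtain ⟨e, he2, h0⟩ := exists_coords f hf (fun x => (p₁ x).rep)
    (fun x => (p₁ x).rep_nonzero) hfv
  have h2 : ∀ x, e (p₁ x).rep 2 = 0 := fun x => by rw [he2, hfv]
  have hA := off_line hR e h0 h2
  have hB := off_line hR.swap23 e h0 h2
  refine affine_core hn (fun x => e (p₁ x).rep 1 / e (p₁ x).rep 0)
    (fun y => e (p₂ y).rep 0 / e (p₂ y).rep 2) (fun y => e (p₂ y).rep 1 / e (p₂ y).rep 2)
    (fun z => e (p₃ z).rep 0 / e (p₃ z).rep 2) (fun z => e (p₃ z).rep 1 / e (p₃ z).rep 2) ?_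
  intro x y z
  rw [← hR.2.2.2.2.2.2 x y z, collin_iff_det e]
  have a0 := h0 x
  have a1 := hA y
  have a2 := hB z
  simp only [Matrix.det_fin_three]
  simp [h2]
  rw [← sub_eq_zero]
  generalize e (p₁ x).rep = u at *
  generalize e (p₂ y).rep = v at *
  generalize e (p₃ z).rep = w at *
  have : (v 1 / v 2 - u 1 / u 0 * (v 0 / v 2) - (w 1 / w 2 - u 1 / u 0 * (w 0 / w 2))) =
    (u 0 * v 1 * w 2 - u 0 * v 2 * w 1 - u 1 * v 0 * w 2 + u 1 * v 2 * w 0) / (u 0 * v 2 * w 2) := by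
    field_simp; ring
  rw [this, div_eq_zero_iff]
  simp [a0, a1, a2]

lemma realizes_of_cyclic (H : Type) [AddCommGroup H] [Fintype H] (hc : IsAddCyclic H) :
    ∃ p₁ p₂ p₃ : H → P2, Realizes p₁ p₂ p₃ ∧
        ∃ L : Set P2, IsProjLine L ∧ Set.range p₁ ⊆ L := by
  obtain ⟨χ, hχ⟩ : ∃ χ : AddChar H ℂ, Function.Injective χ := by
    have : NeZero (Nat.card H) := ⟨Nat.card_pos.ne'⟩
    let φ := (zmodAddCyclicAddEquiv hc).symm
    refine ⟨(ZMod.stdAddChar (N := Nat.card H)).compAddMonoidHom (φ : H →+ ZMod (Nat.card H)), ?_⟩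
    exact ZMod.injective_stdAddChar.comp φ.injective
  have n1 : ∀ x, (![0, 1, -χ x] : Fin 3 → ℂ) ≠ 0 := fun x h => by
    have := congrFun h 1; simp at this
  have n2 : ∀ x, (![-χ x, 0, 1] : Fin 3 → ℂ) ≠ 0 := fun x h => by
    have := congrFun h 2; simp at this
  have n3 : ∀ x, (![1, -χ x, 0] : Fin 3 → ℂ) ≠ 0 := fun x h => by
    have := congrFun h 0; simp at this
  refine ⟨fun x => Projectivization.mk ℂ _ (n1 x), fun x => Projectivization.mk ℂ _ (n2 x),
    fun x => Projectivization.mk ℂ _ (n3 x), ⟨?_, ?_, ?_, ?_, ?_, ?_, ?_⟩, ?_⟩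
  · intro x y hxy
    obtain ⟨a, ha⟩ := (Projectivization.mk_eq_mk_iff' _ _ _ _ _).1 hxy
    have e0 := congrFun ha 0
    have e1 := congrFun ha 1
    have e2 := congrFun ha 2
    simp at e0 e1 e2
    apply hχ; simp_all
  · intro x y hxy
    obtain ⟨a, ha⟩ := (Projectivization.mk_eq_mk_iff' _ _ _ _ _).1 hxy
    have e0 := congrFun ha 0
    have e1 := congrFun ha 1
    have e2 := congrFun ha 2
    simp at e0 e1 e2
    apply hχ; simp_all
  · intro x y hxy
    obtain ⟨a, ha⟩ := (Projectivization.mk_eq_mk_iff' _ _ _ _ _).1 hxy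
    have e0 := congrFun ha 0
    have e1 := congrFun ha 1
    have e2 := congrFun ha 2
    simp at e0 e1 e2
    apply hχ; simp_all
  · rw [Set.disjoint_left]
    rintro _ ⟨x, rfl⟩ ⟨y, hxy⟩
    obtain ⟨a, ha⟩ := (Projectivization.mk_eq_mk_iff' _ _ _ _ _).1 hxy
    have e1 := congrFun ha 1
    have e2 := congrFun ha 2
    simp at e1 e2
    simp [e1] at e2
  · rw [Set.disjoint_left]
    rintro _ ⟨x, rfl⟩ ⟨y, hxy⟩
    obtain ⟨a, ha⟩ := (Projectivization.mk_eq_mk_iff' _ _ _ _ _).1 hxy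
    have e0 := congrFun ha 0
    simp at e0
  · rw [Set.disjoint_left]
    rintro _ ⟨x, rfl⟩ ⟨y, hxy⟩
    obtain ⟨a, ha⟩ := (Projectivization.mk_eq_mk_iff' _ _ _ _ _).1 hxy
    have e0 := congrFun ha 0
    have e2 := congrFun ha 2
    simp at e0 e2
    simp [e2] at e0
  · intro x y z
    rw [collin_mk]
    have : Matrix.det (Matrix.of ![![0, 1, -χ x], ![-χ y, 0, 1], ![1, -χ z, 0]]) =
        1 - χ (x + y + z) := by
      rw [AddChar.map_add_eq_mul, AddChar.map_add_eq_mul]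
      simp [Matrix.det_fin_three]
      ring
    rw [this, sub_eq_zero, eq_comm, ← AddChar.map_zero_eq_one χ]
    exact hχ.eq_iff
  · refine ⟨_, ⟨LinearMap.proj 0, ?_, rfl⟩, ?_⟩
    · intro h
      have := LinearMap.congr_fun h (fun _ => 1)
      simp at this
    · rintro _ ⟨x, rfl⟩
      obtain ⟨s, hs⟩ := Projectivization.exists_smul_eq_mk_rep ℂ _ (n1 x)
      simp only [Set.mem_ofPred_eq]
      rw [← hs]
      simp

/-- A finite abelian group `H` with an element of order at least 7 can be
realized by a 3-net in ℙ²(ℂ) one class of which is a pencil (dually: the image of one of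
the three maps is contained in a line) if and only if `H` is cyclic. -/
theorem realizable_with_pencil_iff_cyclic (H : Type) [AddCommGroup H] [Fintype H]
    (hord : ∃ h : H, 7 ≤ addOrderOf h) :
    (∃ p₁ p₂ p₃ : H → P2, Realizes p₁ p₂ p₃ ∧
        ∃ L : Set P2, IsProjLine L ∧
          (Set.range p₁ ⊆ L ∨ Set.range p₂ ⊆ L ∨ Set.range p₃ ⊆ L)) ↔
      IsAddCyclic H := by
  constructor
  · rintro ⟨p₁, p₂, p₃, hR, L, hL, hp⟩
    obtain ⟨g, hg⟩ := hord
    have hn : 5 ≤ Fintype.card H := by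
      have := addOrderOf_le_card_univ (x := g)
      omega
    rcases hp with hp | hp | hp
    · exact cyclic_of_pencil hn hR hL hp
    · exact cyclic_of_pencil hn hR.swap12 hL hp
    · exact cyclic_of_pencil hn hR.swap23.swap12 hL hp
  · intro hc
    obtain ⟨p₁, p₂, p₃, hR, L, hL, hp⟩ := realizes_of_cyclic H hc
    exact ⟨p₁, p₂, p₃, hR, L, hL, Or.inl hp⟩
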